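/- Let $k \geq 3$ and $\varepsilon \in (0, 1/8)$. Suppose $s, \alpha_1,\dots,\alpha_k \in \mathbb{R}$ satisfy $|\alpha_i| \leq \frac{1}{2(k-1)}$ for all $i$ and $s \geq 1 - \frac1k + \frac{\varepsilon}{k} - \frac1k\sum_{i=1}^k \alpha_i$. Then for nonzero integers $a_1,\dots,a_k$, the series $\sum_{a_1 n_1 + \cdots + a_k n_k = 0} \frac{d(n_1)\cdots d(n_k)}{n_1^{s+\alpha_1}\cdots n_k^{s+\alpha_k}}$ (over positive integers $n_i$) converges, and is bounded by $C_\varepsilon (Ak/\varepsilon)^{4k}$ for an absolute constant $A$ and a constant $C_\varepsilon$ depending only on $\varepsilon$. -/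

import Mathlib

open Finset

/-! On a solution, let `n_j` be the largest coordinate. Since `a_j ≠ 0`, it is determined by the
other coordinates, and its divisor function costs only `d(n_j) ≤ C n_j ^ (ε/4)`. Write
`σ_i = s + α_i`. The exponents sum to at least `k - 1 + ε` and differ pairwise by at most
`1 / (k - 1)`, which forces `∑ i, min σ_i 1 ≥ k - 1 + ε/2`. Hence `n_j ^ (ε/4 - σ_j)` is small
enough to raise each of the other exponents to `1 + η` with `η = ε / (4k)`. As
`∑ d(n) / n ^ s = ζ(s) ^ 2`, the sum over the other coordinates is then at most
`ζ(1 + η) ^ (2(k - 1)) ≤ (1 + 1/η) ^ (2(k - 1))`; the choice of `j` contributes a factor `k`. -/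

/-- The `n`-th term of the Dirichlet series `∑ d(n) / n ^ s = ζ(s) ^ 2`; it vanishes at `n = 0`
because `Nat.divisors 0 = ∅`. -/
noncomputable abbrev divisorTerm (s : ℝ) (n : ℕ) : ℝ := (#n.divisors : ℝ) / (n : ℝ) ^ s

/-- The positive integer points of the hyperplane `∑ i, a i * x i = 0`, which index the divisor
correlation sum. The coordinates are natural numbers, so that they can be fed to `Nat.divisors`. -/
abbrev PosSolution {ι : Type*} [Fintype ι] (a : ι → ℤ) : Type _ :=
  {n : ι → ℕ // (∀ i, 0 < n i) ∧ ∑ i, a i * (n i : ℤ) = 0}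

lemma divisorTerm_nonneg (s : ℝ) (n : ℕ) : 0 ≤ divisorTerm s n := by positivity

lemma divisorTerm_eq_mul_rpow_sub {n : ℕ} (hn : 0 < n) (s t : ℝ) :
    divisorTerm s n = divisorTerm t n * (n : ℝ) ^ (t - s) := by
  have hn' : (0 : ℝ) < n := mod_cast hn
  rw [divisorTerm, divisorTerm, Real.rpow_sub hn', div_mul_div_cancel₀ (by positivity)]

lemma tsum_one_div_rpow_le {s : ℝ} (hs : 1 < s) :
    ∑' n : ℕ, 1 / (n : ℝ) ^ s ≤ 1 + 1 / (s - 1) := by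
  have hshift : ∑' n : ℕ, 1 / (n : ℝ) ^ s = ∑' n : ℕ, 1 / (n + 1 : ℝ) ^ s := by
    rw [(Real.summable_one_div_nat_rpow.mpr hs).tsum_eq_zero_add]
    simp [Real.zero_rpow (by linarith : s ≠ 0)]
  have hremainder : 0 ≤ ZetaAsymptotics.termTSum s :=
    tsum_nonneg fun n ↦ ZetaAsymptotics.term_nonneg (n + 1) s
  have hzeta := ZetaAsymptotics.zeta_limit_aux1 hs
  nlinarith

lemma tsum_mul_fiber_one_div_rpow {s : ℝ} (hs : s ≠ 0) (n : ℕ) :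
    ∑' p : (fun p : ℕ × ℕ ↦ p.1 * p.2) ⁻¹' {n},
      1 / (p.1.1 : ℝ) ^ s * (1 / (p.1.2 : ℝ) ^ s) = divisorTerm s n := by
  rcases eq_or_ne n 0 with rfl | hn
  · have hzero : ∀ p : (fun p : ℕ × ℕ ↦ p.1 * p.2) ⁻¹' {0},
        1 / (p.1.1 : ℝ) ^ s * (1 / (p.1.2 : ℝ) ^ s) = 0 := by
      rintro ⟨⟨x, y⟩, hxy⟩
      rcases mul_eq_zero.mp hxy with h | h <;> simp_all [Real.zero_rpow]
    simp only [divisorTerm, Nat.divisors_zero, card_empty, Nat.cast_zero, zero_div, hzero,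
      tsum_zero]
  · have hfiber : (fun p : ℕ × ℕ ↦ p.1 * p.2) ⁻¹' {n} = n.divisorsAntidiagonal := by
      ext p; simp [hn]
    have hconst : ∀ p ∈ n.divisorsAntidiagonal,
        1 / (p.1 : ℝ) ^ s * (1 / (p.2 : ℝ) ^ s) = 1 / (n : ℝ) ^ s := by
      intro p hp
      rw [one_div_mul_one_div, ← Real.mul_rpow (by positivity) (by positivity),
        ← (Nat.mem_divisorsAntidiagonal.mp hp).1, Nat.cast_mul]
    rw [hfiber, Finset.tsum_subtype' n.divisorsAntidiagonal
      fun p : ℕ × ℕ ↦ 1 / (p.1 : ℝ) ^ s * (1 / (p.2 : ℝ) ^ s), sum_congr rfl hconst, sum_const,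
      ← Nat.map_div_right_divisors, card_map, nsmul_eq_mul, mul_one_div]

lemma hasSum_divisorTerm {s : ℝ} (hs : 1 < s) :
    HasSum (divisorTerm s) ((∑' n : ℕ, 1 / (n : ℝ) ^ s) ^ 2) := by
  have hsum := Real.summable_one_div_nat_rpow.mpr hs
  have hprod := hsum.mul_of_nonneg hsum (fun _ ↦ by positivity) (fun _ ↦ by positivity)
  have hfibers := (hsum.hasSum.mul hsum.hasSum hprod).tsum_fiberwise fun p ↦ p.1 * p.2
  simpa only [tsum_mul_fiber_one_div_rpow (by linarith : s ≠ 0), ← sq] using hfibers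

lemma tsum_divisorTerm_le {s : ℝ} (hs : 1 < s) :
    ∑' n, divisorTerm s n ≤ (1 + 1 / (s - 1)) ^ 2 := by
  rw [(hasSum_divisorTerm hs).tsum_eq]
  exact pow_le_pow_left₀ (tsum_nonneg fun _ ↦ by positivity) (tsum_one_div_rpow_le hs) 2

lemma natCast_add_one_le_mul_pow {B x : ℝ} (hB : 1 ≤ B) (hx : 1 ≤ x) (hBx : 1 ≤ B * (x - 1))
    (e : ℕ) : (e + 1 : ℝ) ≤ B * x ^ e := by
  have bernoulli : 1 + (e : ℝ) * (x - 1) ≤ x ^ e := by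
    simpa using one_add_mul_le_pow (by linarith : (-2 : ℝ) ≤ x - 1) e
  calc (e + 1 : ℝ) ≤ B + e * (B * (x - 1)) := by nlinarith [Nat.cast_nonneg (α := ℝ) e]
    _ = B * (1 + e * (x - 1)) := by ring
    _ ≤ B * x ^ e := by gcongr

lemma natCast_rpow_eq_prod_primeFactors {n : ℕ} (hn : n ≠ 0) (δ : ℝ) :
    (n : ℝ) ^ δ = ∏ p ∈ n.primeFactors, ((p : ℝ) ^ δ) ^ n.factorization p := by
  conv_lhs => rw [← Nat.prod_factorization_pow_eq_self hn]
  rw [Finsupp.prod, Nat.support_factorization, Nat.cast_prod,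
    ← Real.finsetProd_rpow _ _ fun _ _ ↦ by positivity]
  refine prod_congr rfl fun p _ ↦ ?_
  rw [Nat.cast_pow, Real.rpow_pow_comm (by positivity)]

theorem exists_card_divisors_le_mul_rpow {δ : ℝ} (hδ : 0 < δ) :
    ∃ C : ℝ, 0 < C ∧ ∀ n : ℕ, (#n.divisors : ℝ) ≤ C * (n : ℝ) ^ δ := by
  obtain ⟨M, hM⟩ : ∃ M : ℕ, ∀ p ≥ M, (2 : ℝ) ≤ (p : ℝ) ^ δ := Filter.eventually_atTop.mp
    (((tendsto_rpow_atTop hδ).comp tendsto_natCast_atTop_atTop).eventually_ge_atTop 2)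
  have htwo : 0 < (2 : ℝ) ^ δ - 1 := sub_pos.mpr (Real.one_lt_rpow one_lt_two hδ)
  set B : ℝ := max 1 ((2 : ℝ) ^ δ - 1)⁻¹
  have hB : 1 ≤ B := le_max_left _ _
  refine ⟨B ^ M, by positivity, fun n ↦ ?_⟩
  rcases eq_or_ne n 0 with rfl | hn
  · simp [Real.zero_rpow hδ.ne']
  have hlocal : ∀ p ∈ n.primeFactors, (n.factorization p + 1 : ℝ) ≤
      (if p < M then B else 1) * ((p : ℝ) ^ δ) ^ n.factorization p := by
    intro p hp
    have hp2 : (2 : ℝ) ^ δ ≤ (p : ℝ) ^ δ := Real.rpow_le_rpow zero_le_two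
      (mod_cast (Nat.prime_of_mem_primeFactors hp).two_le) hδ.le
    split_ifs with hpM
    · refine natCast_add_one_le_mul_pow hB (by linarith) ?_ _
      calc 1 = ((2 : ℝ) ^ δ - 1)⁻¹ * ((2 : ℝ) ^ δ - 1) := (inv_mul_cancel₀ htwo.ne').symm
        _ ≤ B * ((p : ℝ) ^ δ - 1) := by gcongr; exact le_max_right _ _
    · have := hM p (not_lt.mp hpM)
      exact natCast_add_one_le_mul_pow le_rfl (by linarith) (by linarith) _
  have hconst : ∏ p ∈ n.primeFactors, (if p < M then B else 1) ≤ B ^ M := by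
    rw [prod_ite, prod_const, prod_const_one, mul_one]
    refine pow_le_pow_right₀ hB ?_
    calc #{p ∈ n.primeFactors | p < M} ≤ #(range M) := card_le_card fun p ↦ by simp
      _ = M := card_range M
  calc (#n.divisors : ℝ) = ∏ p ∈ n.primeFactors, (n.factorization p + 1 : ℝ) := by
        rw [Nat.card_divisors hn]; push_cast; rfl
    _ ≤ ∏ p ∈ n.primeFactors,
          (if p < M then B else 1) * ((p : ℝ) ^ δ) ^ n.factorization p :=
        prod_le_prod (fun _ _ ↦ by positivity) hlocal
    _ ≤ B ^ M * (n : ℝ) ^ δ := by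
        rw [prod_mul_distrib, ← natCast_rpow_eq_prod_primeFactors hn]
        gcongr

section PiSeries

variable {ι α : Type*} [Fintype ι] {f : ι → α → ℝ}

lemma sum_prod_le_prod_tsum (hf : ∀ i x, 0 ≤ f i x) (hs : ∀ i, Summable (f i))
    (T : Finset (ι → α)) : ∑ x ∈ T, ∏ i, f i (x i) ≤ ∏ i, ∑' y, f i y := by
  classical
  calc ∑ x ∈ T, ∏ i, f i (x i)
      ≤ ∑ x ∈ Fintype.piFinset fun i ↦ T.image (· i), ∏ i, f i (x i) :=
        sum_le_sum_of_subset_of_nonneg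
          (fun x hx ↦ Fintype.mem_piFinset.mpr fun i ↦ mem_image_of_mem _ hx)
          fun x _ _ ↦ prod_nonneg fun i _ ↦ hf i (x i)
    _ = ∏ i, ∑ y ∈ T.image (· i), f i y := (prod_univ_sum _ _).symm
    _ ≤ ∏ i, ∑' y, f i y := prod_le_prod (fun i _ ↦ sum_nonneg fun y _ ↦ hf i y)
        fun i _ ↦ (hs i).sum_le_tsum _ fun y _ ↦ hf i y

lemma summable_prod_pi (hf : ∀ i x, 0 ≤ f i x) (hs : ∀ i, Summable (f i)) :
    Summable fun x : ι → α ↦ ∏ i, f i (x i) :=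
  summable_of_sum_le (fun x ↦ prod_nonneg fun i _ ↦ hf i (x i)) (sum_prod_le_prod_tsum hf hs)

lemma tsum_prod_pi_le (hf : ∀ i x, 0 ≤ f i x) (hs : ∀ i, Summable (f i)) :
    ∑' x : ι → α, ∏ i, f i (x i) ≤ ∏ i, ∑' y, f i y :=
  Real.tsum_le_of_sum_le (fun x ↦ prod_nonneg fun i _ ↦ hf i (x i)) (sum_prod_le_prod_tsum hf hs)

end PiSeries

lemma card_mul_sum_sub_card_mul_sum_le {ι : Type*} {σ : ι → ℝ} {d : ℝ} (h : ∀ i j, σ i - σ j ≤ d)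
    (S T : Finset ι) :
    #T * ∑ i ∈ S, σ i - #S * ∑ j ∈ T, σ j ≤ #S * #T * d :=
  calc _ = ∑ p ∈ S ×ˢ T, (σ p.1 - σ p.2) := by
        simp only [sum_product, sum_sub_distrib, sum_const, nsmul_eq_mul, mul_sum]
    _ ≤ _ := by
        simpa [card_product] using sum_le_card_nsmul (S ×ˢ T) _ _ fun p _ ↦ h p.1 p.2

lemma sub_one_add_half_le_add_of_mul_sub_mul_le {k m P N ε : ℝ} (hε : 0 ≤ ε) (hε1 : ε ≤ 1)
    (hk : 2 ≤ k) (hm : 0 ≤ m * (m - 1)) (hmk : m ≤ k)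
    (hcross : (k - m) * P - m * N ≤ m * (k - m) * (1 / (k - 1))) (hsum : k - 1 + ε ≤ P + N) :
    k - 1 + ε / 2 ≤ m + N := by
  rw [mul_one_div, le_div_iff₀ (by linarith)] at hcross
  have hsq : 0 ≤ k * (k - 1) / 2 - m * (k - m) := by nlinarith [sq_nonneg (2 * m - k)]
  -- After eliminating `P` the claim is affine in `ε`, so it interpolates between `ε = 0`, `ε = 1`.
  have hconvex : 0 ≤ (1 - ε) * (m * (m - 1)) + ε * (k * (k - 1) / 2 - m * (k - m)) :=
    add_nonneg (mul_nonneg (by linarith) hm) (mul_nonneg hε hsq)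
  have hP : (k - m) * (k - 1) * (k - 1 + ε - N) ≤ (k - m) * (k - 1) * P :=
    mul_le_mul_of_nonneg_left (by linarith) (mul_nonneg (by linarith) (by linarith))
  refine le_of_mul_le_mul_left (a := k * (k - 1)) ?_ (by nlinarith)
  linarith

section Hyperplane

variable {ι : Type*} [Fintype ι] {a : ι → ℤ} {σ : ι → ℝ} {η κ C : ℝ}

lemma sum_min_one_eq [DecidableEq ι] :
    ∑ i, min (σ i) 1 = #{i | 1 < σ i} + ∑ i ∈ ({i | 1 < σ i} : Finset ι)ᶜ, σ i := by
  rw [← sum_add_sum_compl {i | 1 < σ i}, card_eq_sum_ones, Nat.cast_sum, Nat.cast_one]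
  congr 1
  · exact sum_congr rfl fun i hi ↦ min_eq_right (mem_filter.mp hi).2.le
  · exact sum_congr rfl fun i hi ↦ min_eq_left (by simpa using hi)

lemma card_sub_one_add_half_le_sum_min {ε : ℝ} (hε : 0 ≤ ε) (hε1 : ε ≤ 1)
    (hι : 2 ≤ Fintype.card ι)
    (hspread : ∀ i j, σ i - σ j ≤ 1 / ((Fintype.card ι : ℝ) - 1))
    (hsum : (Fintype.card ι : ℝ) - 1 + ε ≤ ∑ i, σ i) :
    (Fintype.card ι : ℝ) - 1 + ε / 2 ≤ ∑ i, min (σ i) 1 := by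
  classical
  rw [sum_min_one_eq]
  set S : Finset ι := {i | 1 < σ i}
  have hcross := card_mul_sum_sub_card_mul_sum_le hspread S Sᶜ
  rw [card_compl, Nat.cast_sub (card_le_univ S)] at hcross
  have hS : 0 ≤ (#S : ℝ) * (#S - 1) := by
    rcases Nat.eq_zero_or_pos #S with h | h
    · simp [h]
    · exact mul_nonneg (by positivity) (sub_nonneg.mpr (mod_cast h))
  rw [← sum_add_sum_compl S] at hsum
  exact sub_one_add_half_le_add_of_mul_sub_mul_le hε hε1 (mod_cast hι) hS
    (mod_cast card_le_univ S) hcross hsum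

lemma prod_rpow_le_rpow_of_le_max [DecidableEq ι] {x : ι → ℝ} (hη : 0 ≤ η)
    (hσ : ((Fintype.card ι : ℝ) - 1) * (1 + η) + κ ≤ ∑ i, min (σ i) 1)
    {j : ι} (hx : ∀ i, 1 ≤ x i) (hj : ∀ i, x i ≤ x j) :
    ∏ i : {i // i ≠ j}, x i ^ (1 + η - σ i) ≤ x j ^ (σ j - κ) := by
  have hexp : ∑ i : {i // i ≠ j}, (1 + η - min (σ i) 1) ≤ σ j - κ := by
    rw [Fintype.sum_eq_add_sum_subtype_ne _ j] at hσ
    have hcard : (Fintype.card {i // i ≠ j} : ℝ) = Fintype.card ι - 1 := by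
      rw [Fintype.card_subtype_compl, Fintype.card_subtype_eq,
        Nat.cast_sub (Fintype.card_pos_iff.mpr ⟨j⟩), Nat.cast_one]
    rw [sum_sub_distrib, sum_const, card_univ, nsmul_eq_mul, hcard]
    linarith [min_le_left (σ j) 1]
  have hxj : 0 < x j := zero_lt_one.trans_le (hx j)
  calc ∏ i : {i // i ≠ j}, x i ^ (1 + η - σ i)
      ≤ ∏ i : {i // i ≠ j}, x j ^ (1 + η - min (σ i) 1) := by
        refine prod_le_prod (fun i _ ↦ Real.rpow_nonneg (zero_le_one.trans (hx i)) _) fun i _ ↦ ?_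
        calc x i ^ (1 + η - σ i) ≤ x i ^ (1 + η - min (σ i) 1) :=
              Real.rpow_le_rpow_of_exponent_le (hx i) (sub_le_sub_left (min_le_left _ _) _)
          _ ≤ x j ^ (1 + η - min (σ i) 1) :=
              Real.rpow_le_rpow (zero_le_one.trans (hx i)) (hj i)
                (by linarith [min_le_right (σ i) 1])
    _ = x j ^ ∑ i : {i // i ≠ j}, (1 + η - min (σ i) 1) := (Real.rpow_sum_of_pos hxj _ _).symm
    _ ≤ x j ^ (σ j - κ) := Real.rpow_le_rpow_of_exponent_le (hx j) hexp

lemma prod_divisorTerm_le_of_le_max [DecidableEq ι] (hη : 0 ≤ η)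
    (hσ : ((Fintype.card ι : ℝ) - 1) * (1 + η) + κ ≤ ∑ i, min (σ i) 1)
    (hC : ∀ n : ℕ, (#n.divisors : ℝ) ≤ C * (n : ℝ) ^ κ)
    {n : ι → ℕ} (hn : ∀ i, 0 < n i) {j : ι} (hj : ∀ i, n i ≤ n j) :
    ∏ i, divisorTerm (σ i) (n i) ≤ C * ∏ i : {i // i ≠ j}, divisorTerm (1 + η) (n i) := by
  have hnj : (0 : ℝ) < n j := mod_cast hn j
  have hmax : divisorTerm (σ j) (n j) ≤ C * ((n j : ℝ) ^ (σ j - κ))⁻¹ := by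
    rw [← Real.rpow_neg hnj.le, neg_sub, Real.rpow_sub hnj, ← mul_div_assoc]
    exact div_le_div_of_nonneg_right (hC _) (by positivity)
  have hrest : ∏ i : {i // i ≠ j}, divisorTerm (σ i) (n i) ≤
      (∏ i : {i // i ≠ j}, divisorTerm (1 + η) (n i)) * (n j : ℝ) ^ (σ j - κ) := by
    rw [prod_congr rfl fun (i : {i // i ≠ j}) _ ↦ divisorTerm_eq_mul_rpow_sub (hn i) (σ i) (1 + η),
      prod_mul_distrib]
    exact mul_le_mul_of_nonneg_left (prod_rpow_le_rpow_of_le_max (x := fun i ↦ n i) hη hσ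
      (fun i ↦ mod_cast hn i) fun i ↦ mod_cast hj i) (by positivity)
  have hpow : (n j : ℝ) ^ (σ j - κ) ≠ 0 := (Real.rpow_pos_of_pos hnj _).ne'
  calc ∏ i, divisorTerm (σ i) (n i)
      = divisorTerm (σ j) (n j) * ∏ i : {i // i ≠ j}, divisorTerm (σ i) (n i) :=
        Fintype.prod_eq_mul_prod_subtype_ne _ j
    _ ≤ C * ((n j : ℝ) ^ (σ j - κ))⁻¹ *
          ((∏ i : {i // i ≠ j}, divisorTerm (1 + η) (n i)) * (n j : ℝ) ^ (σ j - κ)) :=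
        mul_le_mul hmax hrest (by positivity) ((divisorTerm_nonneg _ _).trans hmax)
    _ = C * ∏ i : {i // i ≠ j}, divisorTerm (1 + η) (n i) := by
        rw [mul_comm (∏ _, _), mul_assoc, inv_mul_cancel_left₀ hpow]

lemma PosSolution.restrict_injective {j : ι} (hj : a j ≠ 0) :
    Function.Injective fun (n : PosSolution a) (i : {i // i ≠ j}) ↦ n.1 i := by
  classical
  intro n n' h
  have hne (i : {i // i ≠ j}) : n.1 i = n'.1 i := congrFun h i
  have hsum := n.2.2.trans n'.2.2.symm
  simp only [Fintype.sum_eq_add_sum_subtype_ne _ j, hne, add_left_inj, mul_eq_mul_left_iff, hj,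
    or_false, Nat.cast_inj] at hsum
  ext i
  rcases eq_or_ne i j with rfl | hi
  exacts [hsum, hne ⟨i, hi⟩]

lemma summable_prod_ne_divisorTerm [DecidableEq ι] {j : ι} (hj : a j ≠ 0) {s : ℝ} (hs : 1 < s) :
    Summable fun n : PosSolution a ↦ ∏ i : {i // i ≠ j}, divisorTerm s (n.1 i) :=
  (summable_prod_pi (fun _ ↦ divisorTerm_nonneg s)
    fun _ ↦ (hasSum_divisorTerm hs).summable).comp_injective (PosSolution.restrict_injective hj)

lemma tsum_prod_ne_divisorTerm_le [DecidableEq ι] {j : ι} (hj : a j ≠ 0) {s : ℝ} (hs : 1 < s) :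
    ∑' n : PosSolution a, ∏ i : {i // i ≠ j}, divisorTerm s (n.1 i) ≤
      (∑' m, divisorTerm s m) ^ (Fintype.card ι - 1) := by
  have hsum (_ : {i // i ≠ j}) : Summable (divisorTerm s) := (hasSum_divisorTerm hs).summable
  calc ∑' n : PosSolution a, ∏ i : {i // i ≠ j}, divisorTerm s (n.1 i)
      ≤ ∑' x : {i // i ≠ j} → ℕ, ∏ i, divisorTerm s (x i) :=
        tsum_comp_le_tsum_of_inj (summable_prod_pi (fun _ ↦ divisorTerm_nonneg s) hsum)
          (fun x ↦ prod_nonneg fun i _ ↦ divisorTerm_nonneg s (x i))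
          (PosSolution.restrict_injective hj)
    _ ≤ ∏ _i : {i // i ≠ j}, ∑' m, divisorTerm s m :=
        tsum_prod_pi_le (fun _ ↦ divisorTerm_nonneg s) hsum
    _ = (∑' m, divisorTerm s m) ^ (Fintype.card ι - 1) := by
        rw [prod_const, card_univ, Fintype.card_subtype_compl, Fintype.card_subtype_eq]

theorem summable_and_tsum_prod_divisorTerm_le [Nonempty ι] (ha : ∀ i, a i ≠ 0) (hη : 0 < η)
    (hσ : ((Fintype.card ι : ℝ) - 1) * (1 + η) + κ ≤ ∑ i, min (σ i) 1)
    (hC : ∀ n : ℕ, (#n.divisors : ℝ) ≤ C * (n : ℝ) ^ κ) :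
    (Summable fun n : PosSolution a ↦ ∏ i, divisorTerm (σ i) (n.1 i)) ∧
      ∑' n : PosSolution a, ∏ i, divisorTerm (σ i) (n.1 i) ≤
        Fintype.card ι * (C * (∑' m, divisorTerm (1 + η) m) ^ (Fintype.card ι - 1)) := by
  classical
  have hC0 : 0 ≤ C := by simpa using (Nat.cast_nonneg _).trans (hC 1)
  set g : ι → PosSolution a → ℝ :=
    fun j n ↦ C * ∏ i : {i // i ≠ j}, divisorTerm (1 + η) (n.1 i)
  have hg (j : ι) : Summable (g j) :=
    (summable_prod_ne_divisorTerm (ha j) (by linarith)).mul_left C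
  have hg0 (j : ι) (n : PosSolution a) : 0 ≤ g j n :=
    mul_nonneg hC0 (prod_nonneg fun _ _ ↦ divisorTerm_nonneg _ _)
  have hle (n : PosSolution a) : ∏ i, divisorTerm (σ i) (n.1 i) ≤ ∑ j, g j n := by
    obtain ⟨j, hj⟩ := Finite.exists_max n.1
    exact (prod_divisorTerm_le_of_le_max hη.le hσ hC n.2.1 hj).trans
      (single_le_sum (f := (g · n)) (fun i _ ↦ hg0 i n) (mem_univ j))
  have hsum : Summable fun n : PosSolution a ↦ ∏ i, divisorTerm (σ i) (n.1 i) :=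
    .of_nonneg_of_le (fun n ↦ prod_nonneg fun _ _ ↦ divisorTerm_nonneg _ _) hle
      (summable_sum fun j _ ↦ hg j)
  refine ⟨hsum, ?_⟩
  calc ∑' n : PosSolution a, ∏ i, divisorTerm (σ i) (n.1 i)
      ≤ ∑' n, ∑ j, g j n := hsum.tsum_le_tsum hle (summable_sum fun j _ ↦ hg j)
    _ = ∑ j, ∑' n, g j n := Summable.tsum_finsetSum fun j _ ↦ hg j
    _ ≤ ∑ _j : ι, C * (∑' m, divisorTerm (1 + η) m) ^ (Fintype.card ι - 1) :=
        sum_le_sum fun j _ ↦ tsum_mul_left.trans_le <| mul_le_mul_of_nonneg_left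
          (tsum_prod_ne_divisorTerm_le (ha j) (by linarith)) hC0
    _ = _ := by rw [sum_const, card_univ, nsmul_eq_mul]

end Hyperplane

lemma sub_le_one_div_of_abs_le {x y d : ℝ} (hx : |x| ≤ 1 / (2 * d)) (hy : |y| ≤ 1 / (2 * d)) :
    x - y ≤ 1 / d := by
  have hhalf : 1 / (2 * d) + 1 / (2 * d) = 1 / d := by
    rw [← one_div_mul_one_div, ← add_mul]; norm_num
  linarith [(abs_le.mp hx).2, (abs_le.mp hy).1]

lemma sub_one_add_le_sum_const_add {k : ℕ} (hk : k ≠ 0) {ε s : ℝ} {α : Fin k → ℝ}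
    (hs : 1 - 1 / (k : ℝ) + ε / k - (∑ i, α i) / k ≤ s) : (k : ℝ) - 1 + ε ≤ ∑ i, (s + α i) := by
  have hk' : (k : ℝ) ≠ 0 := mod_cast hk
  rw [sum_add_distrib, sum_const, card_univ, Fintype.card_fin, nsmul_eq_mul]
  calc (k : ℝ) - 1 + ε
      = k * (1 - 1 / (k : ℝ) + ε / k - (∑ i, α i) / k) + ∑ i, α i := by field_simp [hk']; ring
    _ ≤ k * s + ∑ i, α i := by gcongr

lemma mul_pow_two_mul_pred_le {k : ℕ} {ε : ℝ} (hε : 0 < ε) (hε1 : ε ≤ 1) (hk : 1 ≤ k) :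
    k * ((1 + 1 / (ε / (4 * k))) ^ 2) ^ (k - 1) ≤ (5 * k / ε) ^ (4 * k) := by
  have hk1 : (1 : ℝ) ≤ k := mod_cast hk
  have hkε : (k : ℝ) ≤ k / ε := le_div_self (by positivity) hε hε1
  have hbase : 1 + 1 / (ε / (4 * k)) ≤ 5 * k / ε := by
    rw [one_div_div, mul_div_assoc, mul_div_assoc]; linarith
  have hlinear : (k : ℝ) ≤ 5 * k / ε := by rw [mul_div_assoc]; linarith
  calc k * ((1 + 1 / (ε / (4 * k))) ^ 2) ^ (k - 1)
      ≤ 5 * k / ε * ((5 * k / ε) ^ 2) ^ (k - 1) := by gcongr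
    _ = (5 * k / ε) ^ (2 * (k - 1) + 1) := by rw [← pow_mul, pow_succ']
    _ ≤ (5 * k / ε) ^ (4 * k) := pow_le_pow_right₀ (hk1.trans hlinear) (by omega)

theorem divisor_correlation_abs_convergence_general :
    ∃ A : ℝ, 0 < A ∧ ∀ ε : ℝ, 0 < ε → ε ≤ 1 → ∃ C : ℝ, 0 < C ∧
      ∀ k : ℕ, 2 ≤ k → ∀ s : ℝ, ∀ α : Fin k → ℝ, ∀ a : Fin k → ℤ,
        (∀ i, a i ≠ 0) →
        (∀ i j, α i - α j ≤ 1 / ((k : ℝ) - 1)) →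
        1 - 1 / (k : ℝ) + ε / k - (∑ i, α i) / k ≤ s →
        Summable (fun n : PosSolution a ↦ ∏ i, divisorTerm (s + α i) (n.1 i)) ∧
          ∑' n : PosSolution a, ∏ i, divisorTerm (s + α i) (n.1 i) ≤
            C * (A * k / ε) ^ (4 * k) := by
  refine ⟨5, by norm_num, fun ε hε hε1 ↦ ?_⟩
  obtain ⟨C, hC, hdiv⟩ := exists_card_divisors_le_mul_rpow (by positivity : 0 < ε / 4)
  refine ⟨C, hC, fun k hk s α a ha hα hs ↦ ?_⟩
  have : Nonempty (Fin k) := ⟨⟨0, by omega⟩⟩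
  set η : ℝ := ε / (4 * k) with hη_def
  have hη : 0 < η := by positivity
  have hmin : (k : ℝ) - 1 + ε / 2 ≤ ∑ i, min (s + α i) 1 := by
    simpa using card_sub_one_add_half_le_sum_min hε.le hε1 (by simpa using hk)
      (σ := fun i ↦ s + α i) (by simpa using hα)
      (by simpa using sub_one_add_le_sum_const_add (by omega) hs)
  have hkη : k * η = ε / 4 := by rw [hη_def]; field_simp
  obtain ⟨hsum, hle⟩ := summable_and_tsum_prod_divisorTerm_le (σ := fun i ↦ s + α i) ha hη
    (by rw [Fintype.card_fin]; linarith) hdiv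
  refine ⟨hsum, hle.trans ?_⟩
  have hseries : ∑' m, divisorTerm (1 + η) m ≤ (1 + 1 / η) ^ 2 := by
    simpa using tsum_divisorTerm_le (by linarith : 1 < 1 + η)
  calc _ ≤ C * (k * ((1 + 1 / η) ^ 2) ^ (k - 1)) := by
        rw [Fintype.card_fin, mul_left_comm]
        gcongr
    _ ≤ C * (5 * k / ε) ^ (4 * k) :=
        mul_le_mul_of_nonneg_left (mul_pow_two_mul_pred_le hε hε1 (by omega)) hC.le

theorem divisor_correlation_abs_convergence :
    ∃ A : ℝ, 0 < A ∧ ∀ ε : ℝ, 0 < ε → ε < 1 / 8 → ∃ C : ℝ, 0 < C ∧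
      ∀ k : ℕ, 3 ≤ k → ∀ s : ℝ, ∀ α : Fin k → ℝ, ∀ a : Fin k → ℤ,
        (∀ i, a i ≠ 0) →
        (∀ i, |α i| ≤ 1 / (2 * ((k : ℝ) - 1))) →
        1 - 1 / (k : ℝ) + ε / k - (∑ i, α i) / k ≤ s →
        Summable (fun n : {n : Fin k → ℕ // (∀ i, 0 < n i) ∧
              (∑ i, a i * (n i : ℤ)) = 0} =>
            ∏ i, ((n.1 i).divisors.card : ℝ) / (n.1 i : ℝ) ^ (s + α i)) ∧
          (∑' n : {n : Fin k → ℕ // (∀ i, 0 < n i) ∧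
              (∑ i, a i * (n i : ℤ)) = 0},
            ∏ i, ((n.1 i).divisors.card : ℝ) / (n.1 i : ℝ) ^ (s + α i)) ≤
            C * (A * k / ε) ^ (4 * k) := by
  obtain ⟨A, hA, hgeneral⟩ := divisor_correlation_abs_convergence_general
  refine ⟨A, hA, fun ε hε hε8 ↦ ?_⟩
  obtain ⟨C, hC, hbound⟩ := hgeneral ε hε (by linarith)
  exact ⟨C, hC, fun k hk s α a ha hα hs ↦ hbound k (by omega) s α a ha
    (fun i j ↦ sub_le_one_div_of_abs_le (hα i) (hα j)) hs⟩
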